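/- Let Φ ∈ ℝ^{m×n} have restricted isometry constant δ := δ_{2K} ∈ (0,1) of order 2K, set τ := δ^{1/2}, let x ∈ ℝ^n be K-sparse with support T, |T| = K ≥ 1, and let y = Φx + v. Then for every run of K iterations of OMP applied to (Φ, y), the final residual satisfies ‖r^K‖₂² ≥ (1 − 2τ)·‖x_{Γ^K}‖₂² − (1/τ − 1)·‖v‖₂², where Γ^K := T\T^K and x_{Γ^K} is the restriction of x to the indices in Γ^K. -/

import Mathlib

noncomputable section
open Finset

/-- `Vec n` is `ℝ^n` with the Euclidean (ℓ²) norm. -/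
abbrev Vec (n : ℕ) := EuclideanSpace ℝ (Fin n)

/-- The standard inner product `⟨u, v⟩ = ∑ i, u i * v i`. -/
def dot {n : ℕ} (u v : Vec n) : ℝ := ∑ i, u i * v i

/-- The `j`-th column of a matrix, as a Euclidean vector. -/
def col {m n : ℕ} (Φ : Matrix (Fin m) (Fin n) ℝ) (j : Fin n) : Vec m :=
  WithLp.toLp 2 fun i => Φ i j

/-- Matrix-vector multiplication `Φ x`, valued in Euclidean space. -/
def mulVec' {m n : ℕ} (Φ : Matrix (Fin m) (Fin n) ℝ) (x : Vec n) : Vec m :=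
  WithLp.toLp 2 fun i => ∑ j, Φ i j * x j

/-- The support of a vector, as a `Finset`. -/
def suppF {n : ℕ} (x : Vec n) : Finset (Fin n) :=
  Finset.univ.filter fun i => x i ≠ 0

/-- Restriction of a vector to an index set (zero outside the set). -/
def restrict {n : ℕ} (x : Vec n) (S : Finset (Fin n)) : Vec n :=
  WithLp.toLp 2 fun i => if i ∈ S then x i else 0

/-- `RIPConst Φ L δ` : δ is the restricted isometry constant of `Φ` of order `L`,
i.e. the smallest `c ≥ 0` such that `(1-c)‖u‖² ≤ ‖Φu‖² ≤ (1+c)‖u‖²` for all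
`L`-sparse `u`. -/
def RIPConst {m n : ℕ} (Φ : Matrix (Fin m) (Fin n) ℝ) (L : ℕ) (δ : ℝ) : Prop :=
  IsLeast {c : ℝ | 0 ≤ c ∧ ∀ u : Vec n, (suppF u).card ≤ L →
    (1 - c) * ‖u‖ ^ 2 ≤ ‖mulVec' Φ u‖ ^ 2 ∧ ‖mulVec' Φ u‖ ^ 2 ≤ (1 + c) * ‖u‖ ^ 2} δ

/-- Signal-to-noise ratio `‖Φx‖²/‖v‖²`. -/
def SNR {m n : ℕ} (Φ : Matrix (Fin m) (Fin n) ℝ) (x : Vec n) (v : Vec m) : ℝ :=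
  ‖mulVec' Φ x‖ ^ 2 / ‖v‖ ^ 2

/-- A run of `N` iterations of Orthogonal Matching Pursuit on data `(Φ, y)`:
`idx (k+1) = t^{k+1}` is the index selected at iteration `k+1`, `sets k = T^k`,
`est k = x^k` and `res k = r^k`. -/
structure OMPRun {m n : ℕ} (Φ : Matrix (Fin m) (Fin n) ℝ) (y : Vec m) (N : ℕ) where
  idx : ℕ → Fin n
  sets : ℕ → Finset (Fin n)
  est : ℕ → Vec n
  res : ℕ → Vec m
  sets_zero : sets 0 = ∅
  est_zero : est 0 = 0
  res_zero : res 0 = y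
  idx_not_mem : ∀ k < N, idx (k + 1) ∉ sets k
  idx_max : ∀ k < N, ∀ i : Fin n, i ∉ sets k →
    |dot (col Φ i) (res k)| ≤ |dot (col Φ (idx (k + 1))) (res k)|
  sets_succ : ∀ k < N, sets (k + 1) = insert (idx (k + 1)) (sets k)
  est_supp : ∀ k < N, suppF (est (k + 1)) ⊆ sets (k + 1)
  est_min : ∀ k < N, ∀ u : Vec n, suppF u ⊆ sets (k + 1) →
    ‖y - mulVec' Φ (est (k + 1))‖ ≤ ‖y - mulVec' Φ u‖
  res_succ : ∀ k < N, res (k + 1) = y - mulVec' Φ (est (k + 1))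

/-- The vector `Φᵀ w` restricted to an index set `A` (the vector of correlations
`⟨φ_i, w⟩` for `i ∈ A`, zero outside `A`), as a Euclidean vector. -/
def colDots {m n : ℕ} (Φ : Matrix (Fin m) (Fin n) ℝ) (A : Finset (Fin n)) (w : Vec m) : Vec n :=
  WithLp.toLp 2 fun i => if i ∈ A then dot (col Φ i) w else 0

/-- The vector `Φᵀ w` of all column correlations, as a plain function (so `‖·‖`
is the sup/ℓ∞ norm). -/
def dualVec {m n : ℕ} (Φ : Matrix (Fin m) (Fin n) ℝ) (w : Vec m) : Fin n → ℝ :=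
  fun i => dot (col Φ i) w

/-- `P⊥_S w` : the projection of `w` onto the orthogonal complement of the span
of the columns of `Φ` indexed by `S`. -/
def perpProj {m n : ℕ} (Φ : Matrix (Fin m) (Fin n) ℝ) (S : Finset (Fin n)) (w : Vec m) : Vec m :=
  w - (Submodule.orthogonalProjectionOnto (Submodule.span ℝ (col Φ '' (S : Set (Fin n)))) w : Vec m)

/-- The `j`-th largest value (1-indexed) among `{|x i| : i ∈ Γ}` (with
multiplicities); `0` if `j > |Γ|` or `j = 0`. -/
def kthLargest {n : ℕ} (x : Vec n) (Γ : Finset (Fin n)) (j : ℕ) : ℝ :=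
  if 1 ≤ j ∧ j ≤ Γ.card then
    (Multiset.sort (Γ.val.map fun i => |x i|) (· ≤ ·)).getD (Γ.card - j) 0
  else 0

/-!
The output `z = x^K` of OMP is supported on the `K`-element set `T^K`, and the residual is
`y - Φ z = Φ (x - z) + v`. By Young's inequality, the noise costs a factor `1 - τ` and a term
`(1 / τ - 1) ‖v‖²`. Since `x - z` is `2K`-sparse, passing from `‖Φ (x - z)‖²` to `‖x - z‖²` costs a
factor `1 - δ`. Finally `x - z` agrees with `x` off `T^K`, and for `δ = τ²` the two factors multiply
to `(1 - τ) (1 - τ²) ≥ 1 - 2 τ`.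
-/

section Young

variable {E : Type*} [SeminormedAddCommGroup E] [InnerProductSpace ℝ E]

lemma one_sub_mul_norm_sq_sub_le_norm_add_sq (a b : E) {t : ℝ} (ht : 0 < t) :
    (1 - t) * ‖a‖ ^ 2 - (1 / t - 1) * ‖b‖ ^ 2 ≤ ‖a + b‖ ^ 2 := by
  have expand_smul_add : ‖t • a + b‖ ^ 2 = t ^ 2 * ‖a‖ ^ 2 + 2 * (t * inner ℝ a b) + ‖b‖ ^ 2 := by
    rw [norm_add_sq_real, norm_smul, mul_pow, real_inner_smul_left, Real.norm_of_nonneg ht.le]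
  have gap_eq : ‖a + b‖ ^ 2 - ((1 - t) * ‖a‖ ^ 2 - (1 / t - 1) * ‖b‖ ^ 2) =
      ‖t • a + b‖ ^ 2 / t := by
    rw [expand_smul_add, norm_add_sq_real]
    field_simp
    ring
  rw [← sub_nonneg, gap_eq]
  positivity

end Young

section Support

variable {n : ℕ} {x z : Vec n} {S : Finset (Fin n)}

lemma mem_suppF {i : Fin n} : i ∈ suppF x ↔ x i ≠ 0 := by
  simp [suppF]

lemma suppF_sub_subset (x z : Vec n) : suppF (x - z) ⊆ suppF x ∪ suppF z := by
  intro i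
  simp only [mem_union, mem_suppF, PiLp.sub_apply]
  contrapose!
  rintro ⟨hx, hz⟩
  rw [hx, hz, sub_zero]

lemma norm_restrict_le (x : Vec n) (S : Finset (Fin n)) : ‖restrict x S‖ ≤ ‖x‖ := by
  rw [EuclideanSpace.norm_eq, EuclideanSpace.norm_eq]
  gcongr with i
  by_cases hi : i ∈ S <;> simp [_root_.restrict, hi]

lemma restrict_sub_of_disjoint (h : Disjoint (suppF z) S) :
    restrict (x - z) S = restrict x S := by
  ext i
  by_cases hi : i ∈ S
  · have hzi : z i = 0 := by simpa [mem_suppF] using disjoint_right.mp h hi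
    simp [_root_.restrict, hi, hzi]
  · simp [_root_.restrict, hi]

lemma norm_restrict_le_norm_sub (h : Disjoint (suppF z) S) :
    ‖restrict x S‖ ≤ ‖x - z‖ := by
  rw [← restrict_sub_of_disjoint h]
  exact norm_restrict_le (x - z) S

end Support

lemma mulVec'_sub {m n : ℕ} (Φ : Matrix (Fin m) (Fin n) ℝ) (x z : Vec n) :
    mulVec' Φ (x - z) = mulVec' Φ x - mulVec' Φ z := by
  ext i
  simp [mulVec', mul_sub]

namespace OMPRun

variable {m n N k : ℕ} {Φ : Matrix (Fin m) (Fin n) ℝ} {y : Vec m} (run : OMPRun Φ y N)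

lemma card_sets_le (hk : k ≤ N) : (run.sets k).card ≤ k := by
  induction k with
  | zero => simp [run.sets_zero]
  | succ k ih =>
    rw [run.sets_succ k hk]
    exact (card_insert_le _ _).trans (Nat.succ_le_succ (ih (Nat.le_of_succ_le hk)))

lemma card_union_sets_le (S : Finset (Fin n)) (hk : k ≤ N) :
    (S ∪ run.sets k).card ≤ S.card + k :=
  (card_union_le _ _).trans (Nat.add_le_add_left (run.card_sets_le hk) _)

lemma suppF_est_subset (hk : k ≤ N) : suppF (run.est k) ⊆ run.sets k := by
  cases k with
  | zero => simp [run.est_zero, suppF]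
  | succ k => exact run.est_supp k hk

lemma res_eq (hk : k ≤ N) : run.res k = y - mulVec' Φ (run.est k) := by
  cases k with
  | zero =>
    ext i
    simp [run.res_zero, run.est_zero, mulVec']
  | succ k => exact run.res_succ k hk

end OMPRun

lemma one_sub_two_mul_le {t : ℝ} (h0 : 0 ≤ t) : 1 - 2 * t ≤ (1 - t) * (1 - t ^ 2) := by
  nlinarith [mul_nonneg h0 (sq_nonneg (t - 1)), sq_nonneg t]

section LowerRestrictedIsometry

variable {m n L : ℕ} {Φ : Matrix (Fin m) (Fin n) ℝ} {δ : ℝ}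

lemma mul_norm_restrict_sq_sub_le_norm_residual_sq
    (hΦ : ∀ u : Vec n, (suppF u).card ≤ L → (1 - δ) * ‖u‖ ^ 2 ≤ ‖mulVec' Φ u‖ ^ 2) (hδ : δ ≤ 1)
    (x z : Vec n) (v : Vec m) {S : Finset (Fin n)} (hz : suppF z ⊆ S)
    (hL : (suppF x ∪ S).card ≤ L) {t : ℝ} (ht0 : 0 < t) (ht1 : t ≤ 1) :
    (1 - t) * (1 - δ) * ‖restrict x (suppF x \ S)‖ ^ 2 - (1 / t - 1) * ‖v‖ ^ 2 ≤
      ‖mulVec' Φ x + v - mulVec' Φ z‖ ^ 2 := by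
  have sparse : (suppF (x - z)).card ≤ L :=
    (card_le_card ((suppF_sub_subset x z).trans (union_subset_union_right hz))).trans hL
  have missed_le : ‖restrict x (suppF x \ S)‖ ≤ ‖x - z‖ :=
    norm_restrict_le_norm_sub (disjoint_sdiff.mono_left hz)
  have : 0 ≤ 1 - t := sub_nonneg.mpr ht1
  have : 0 ≤ 1 - δ := sub_nonneg.mpr hδ
  calc (1 - t) * (1 - δ) * ‖restrict x (suppF x \ S)‖ ^ 2 - (1 / t - 1) * ‖v‖ ^ 2
      ≤ (1 - t) * ((1 - δ) * ‖x - z‖ ^ 2) - (1 / t - 1) * ‖v‖ ^ 2 := by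
        rw [mul_assoc]
        gcongr
    _ ≤ (1 - t) * ‖mulVec' Φ (x - z)‖ ^ 2 - (1 / t - 1) * ‖v‖ ^ 2 := by
        gcongr
        exact hΦ (x - z) sparse
    _ ≤ ‖mulVec' Φ (x - z) + v‖ ^ 2 := one_sub_mul_norm_sq_sub_le_norm_add_sq _ _ ht0
    _ = ‖mulVec' Φ x + v - mulVec' Φ z‖ ^ 2 := by rw [mulVec'_sub, sub_add_eq_add_sub]

theorem stmt18_general
    (hΦ : ∀ u : Vec n, (suppF u).card ≤ L → (1 - δ) * ‖u‖ ^ 2 ≤ ‖mulVec' Φ u‖ ^ 2)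
    (h0 : 0 < δ) (h1 : δ ≤ 1) (x z : Vec n) (v : Vec m) {S : Finset (Fin n)} (hz : suppF z ⊆ S)
    (hL : (suppF x ∪ S).card ≤ L) :
    (1 - 2 * √δ) * ‖restrict x (suppF x \ S)‖ ^ 2 - (1 / √δ - 1) * ‖v‖ ^ 2 ≤
      ‖mulVec' Φ x + v - mulVec' Φ z‖ ^ 2 := by
  have factor_le : 1 - 2 * √δ ≤ (1 - √δ) * (1 - δ) := by
    simpa only [Real.sq_sqrt h0.le] using one_sub_two_mul_le (Real.sqrt_nonneg δ)
  refine le_trans ?_ (mul_norm_restrict_sq_sub_le_norm_residual_sq hΦ h1 x z v hz hL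
    (Real.sqrt_pos.mpr h0) (Real.sqrt_le_one.mpr h1))
  gcongr

end LowerRestrictedIsometry

/-- lower bound on the final residual energy:
`‖r^K‖² ≥ (1 − 2τ)‖x_{Γ^K}‖² − (1/τ − 1)‖v‖²` with `τ = δ^{1/2}`. -/
theorem stmt18 {m n K : ℕ} (Φ : Matrix (Fin m) (Fin n) ℝ) (δ : ℝ)
    (x : Vec n) (v y : Vec m) (T : Finset (Fin n))
    (hsupp : suppF x = T) (hcard : T.card = K) (hK1 : 1 ≤ K)
    (hRIP : RIPConst Φ (2 * K) δ) (h0 : 0 < δ) (h1 : δ < 1)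
    (hy : y = mulVec' Φ x + v)
    (run : OMPRun Φ y K) :
    (1 - 2 * Real.sqrt δ) * ‖restrict x (T \ run.sets K)‖ ^ 2 -
        (1 / Real.sqrt δ - 1) * ‖v‖ ^ 2 ≤
      ‖run.res K‖ ^ 2 := by
  subst hsupp hy
  rw [run.res_eq le_rfl]
  exact stmt18_general (fun u hu ↦ (hRIP.1.2 u hu).1) h0 h1.le x (run.est K) v
    (run.suppF_est_subset le_rfl)
    ((run.card_union_sets_le _ le_rfl).trans_eq (by rw [hcard, two_mul]))

end
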